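/- Let m ≥ 4 and let e be an integer with 1 ≤ e < m/2 such that m/gcd(m,e) is even, and set ℓ = 2·gcd(m,e). Then the supports of the codewords of each of the following weights k in the dual code C̄_E^⊥ form a 2-(2^m, k, λ) design with the corresponding λ: for k = 2^{m−1} ± 2^{(m+ℓ−2)/2} (with matching signs), λ = (2^{m−1} ± 2^{(m+ℓ−2)/2})(2^{m−1} ± 2^{(m+ℓ−2)/2} − 1)/(2^ℓ(2^{ℓ/2} + 1)); for k = 2^{m−1} ± 2^{(m−2)/2} (with matching signs), λ = 2^{(m+ℓ−2)/2}(2^{m/2} ± 1)(2^{m−1} ± 2^{(m−2)/2} − 1)/(2^{ℓ/2} + 1); and for k = 2^{m−1}, λ = ((2^{ℓ/2} − 1)·2^{m−ℓ} + 1)(2^{m−1} − 1). -/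

import Mathlib

open Polynomial Finset

/-- The polynomial `c₀ + c₁x + ⋯ + c_{n−1}x^{n−1}` associated to a vector. -/
noncomputable def codePoly {n : ℕ} (c : Fin n → ZMod 2) : Polynomial (ZMod 2) :=
  ∑ i : Fin n, Polynomial.C (c i) * Polynomial.X ^ (i : ℕ)

/-- The generator polynomial `g_E(x) = M_α(x) · M_{α^{1+2^e}}(x)`. -/
noncomputable def gE (m e : ℕ) (α : GaloisField 2 m) : Polynomial (ZMod 2) :=
  minpoly (ZMod 2) α * minpoly (ZMod 2) (α ^ (1 + 2 ^ e))

/-- The binary cyclic code `C_E` of length `2^m − 1` with generator polynomial `g_E`. -/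
def CE (m e : ℕ) (α : GaloisField 2 m) : Set (Fin (2 ^ m - 1) → ZMod 2) :=
  {c | gE m e α ∣ codePoly c}

/-- The extended code `C̄_E ⊆ F_2^{2^m}`: the first `2^m − 1` coordinates form a codeword
of `C_E` and all `2^m` coordinates sum to zero. -/
def CEbar (m e : ℕ) (α : GaloisField 2 m) : Set (Fin (2 ^ m) → ZMod 2) :=
  {c | (fun i : Fin (2 ^ m - 1) => c (Fin.castLE (Nat.sub_le _ _) i)) ∈ CE m e α ∧
       ∑ i, c i = 0}

/-- The dual of a set of vectors over a commutative ring, as a submodule. -/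
def dualCode {n : ℕ} {F : Type*} [CommRing F] (C : Set (Fin n → F)) :
    Submodule F (Fin n → F) where
  carrier := {y | ∀ c ∈ C, ∑ i, y i * c i = 0}
  add_mem' := by
    intro a b ha hb c hc
    have h1 := ha c hc
    have h2 := hb c hc
    simp only [Pi.add_apply, add_mul, Finset.sum_add_distrib, h1, h2, add_zero]
  zero_mem' := by intro c hc; simp
  smul_mem' := by
    intro r a ha c hc
    have h1 := ha c hc
    simp only [Pi.smul_apply, smul_eq_mul, mul_assoc, ← Finset.mul_sum, h1, mul_zero]

/-!
Label the coordinates of the extended code by the points of `F = F_{2^m}`. Then `C̄_E^⊥` consists of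
the functions `x ↦ Tr (a x ^ (1 + 2 ^ e)) + Tr (b x) + c`, a space stable under the affine group of
`F`, which is 2-transitive. Hence the words of any fixed weight `k` form a 2-design, and double
counting gives `λ = N_k k (k - 1) / (2 ^ m (2 ^ m - 1))`, with `N_k` the number of such words.

To find `N_k`, note that the square of the sum `∑ x, (-1) ^ (Tr (a x ^ (1 + 2 ^ e)) + Tr (b x))` is
`0` or `2 ^ m` times the size of the kernel of the polar form of `x ↦ Tr (a x ^ (1 + 2 ^ e))`. For
`a ≠ 0` this size is `1` or `2 ^ ℓ`; how often each occurs follows from counting the pairs `(a, z)`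
with `z` in the kernel. Summing the squares over `b` then shows how often the sum is `0`.
-/

section Designs

variable {ι κ R : Type*} [Fintype ι] [Fintype κ] [DecidableEq R] [Zero R]

/-- The codewords of weight `k` of `C` whose support contains `T`. The supports of the words of
weight `k` form a `t`-`(v, k, λ)` design when this set has `λ` elements for all `T` of size `t`. -/
def codewordsThrough (C : Set (ι → R)) (k : ℕ) (T : Finset ι) : Set (ι → R) :=
  {y | y ∈ C ∧ hammingNorm y = k ∧ ∀ i ∈ T, y i ≠ 0}

lemma hammingNorm_comp_equiv (σ : ι ≃ κ) (y : κ → R) : hammingNorm (y ∘ σ) = hammingNorm y :=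
  Finset.card_equiv σ (by simp)

lemma ncard_codewordsThrough_image_comp (σ : ι ≃ κ) (C : Set (κ → R)) (k : ℕ) (T : Finset ι) :
    (codewordsThrough ((· ∘ σ) '' C) k T).ncard =
      (codewordsThrough C k (T.map σ.toEmbedding)).ncard := by
  rw [← Set.ncard_image_of_injective (codewordsThrough C k _) σ.surjective.injective_comp_right]
  congr 1
  ext y
  constructor
  · rintro ⟨⟨z, hz, rfl⟩, hk, hT⟩
    rw [hammingNorm_comp_equiv] at hk
    exact ⟨z, ⟨hz, hk, Finset.forall_mem_map.2 fun i hi => hT i hi⟩, rfl⟩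
  · rintro ⟨z, ⟨hz, hk, hT⟩, rfl⟩
    exact ⟨⟨z, hz, rfl⟩, (hammingNorm_comp_equiv σ z).trans hk,
      fun i hi => hT _ (mem_map_of_mem _ hi)⟩

variable [Finite R] {C : Set (ι → R)} {k t : ℕ}

lemma ncard_codewordsThrough_map_le {σ : Equiv.Perm ι} (hσ : ∀ y ∈ C, y ∘ σ ∈ C) (T : Finset ι) :
    (codewordsThrough C k (T.map σ.toEmbedding)).ncard ≤ (codewordsThrough C k T).ncard := by
  rw [← ncard_codewordsThrough_image_comp]
  refine Set.ncard_le_ncard ?_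
  rintro _ ⟨⟨y, hy, rfl⟩, h⟩
  exact ⟨hσ y hy, h⟩

lemma sum_ncard_codewordsThrough (C : Set (ι → R)) (k t : ℕ) :
    ∑ T ∈ univ.powersetCard t, (codewordsThrough C k T).ncard =
      (codewordsThrough C k ∅).ncard * k.choose t := by
  classical
  have := Fintype.ofFinite R
  let r : Finset ι → (ι → R) → Prop := fun T y => ∀ i ∈ T, y i ≠ 0
  let W : Finset (ι → R) := (codewordsThrough C k ∅).toFinset
  have hW : ∀ y, y ∈ W ↔ y ∈ C ∧ hammingNorm y = k := fun y => by
    rw [Set.mem_toFinset]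
    simp [codewordsThrough]
  have hT : ∀ T, (codewordsThrough C k T).ncard = #(bipartiteAbove r W T) := by
    intro T
    rw [← Set.ncard_coe_finset]
    congr 1
    ext y
    simp [codewordsThrough, hW, r, and_assoc]
  have hy : ∀ y ∈ W, #(bipartiteBelow r (univ.powersetCard t) y) = k.choose t := by
    intro y hy
    rw [← ((hW y).1 hy).2, hammingNorm, ← card_powersetCard]
    congr 1
    ext T
    simp [r, subset_iff, and_comm]
  rw [sum_congr rfl fun T _ => hT T, sum_card_bipartiteAbove_eq_sum_card_bipartiteBelow,
    sum_congr rfl hy, sum_const, smul_eq_mul, Set.ncard_eq_toFinset_card']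

theorem descFactorial_mul_ncard_codewordsThrough
    (hC : ∀ T T' : Finset ι, #T = t → #T' = t →
      ∃ σ : Equiv.Perm ι, T.map σ.toEmbedding = T' ∧ ∀ y ∈ C, y ∘ σ ∈ C)
    {T : Finset ι} (hT : #T = t) :
    (Fintype.card ι).descFactorial t * (codewordsThrough C k T).ncard =
      (codewordsThrough C k ∅).ncard * k.descFactorial t := by
  have hle : ∀ T T' : Finset ι, #T = t → #T' = t →
      (codewordsThrough C k T').ncard ≤ (codewordsThrough C k T).ncard := by
    intro T T' hT hT'
    obtain ⟨σ, rfl, hσ⟩ := hC T T' hT hT'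
    exact ncard_codewordsThrough_map_le hσ T
  have hsum := sum_ncard_codewordsThrough C k t
  rw [sum_congr rfl fun T' hT' => le_antisymm (hle T T' hT (mem_powersetCard.1 hT').2)
    (hle T' T (mem_powersetCard.1 hT').2 hT), sum_const, card_powersetCard, card_univ,
    smul_eq_mul] at hsum
  rw [Nat.descFactorial_eq_factorial_mul_choose, Nat.descFactorial_eq_factorial_mul_choose,
    mul_assoc, hsum, mul_left_comm]

end Designs

section Duality

variable {n : ℕ} {K : Type*} [Field K]

lemma dualCode_dualCode (D : Submodule K (Fin n → K)) :
    dualCode (dualCode (D : Set (Fin n → K)) : Set (Fin n → K)) = D := by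
  refine le_antisymm (fun y hy => ?_) fun y hy c hc => ?_
  · by_contra hyD
    obtain ⟨φ, hφy, hDφ⟩ := Submodule.exists_le_ker_of_notMem hyD
    let w : Fin n → K := fun i => φ fun j => if i = j then 1 else 0
    have hφ : ∀ z, φ z = ∑ i, z i * w i := LinearMap.pi_apply_eq_sum_univ φ
    refine hφy ((hφ y).trans (hy w fun z hz => ?_))
    simpa only [mul_comm] using (hφ z).symm.trans (hDφ hz)
  · simpa only [mul_comm] using hc y hy

end Duality

section Arithmetic

lemma sq_two_pow_sub_two_mul {m j k n : ℕ} (hj : j < m) (hn : 2 * (j + 1) = n)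
    (hk : k = 2 ^ (m - 1) + 2 ^ j ∨ k = 2 ^ (m - 1) - 2 ^ j) :
    ((2 : ℤ) ^ m - 2 * k) ^ 2 = 2 ^ n := by
  have hm : (2 : ℤ) ^ m = 2 * 2 ^ (m - 1) := (mul_pow_sub_one (by omega) 2).symm
  have hle : 2 ^ j ≤ 2 ^ (m - 1) := Nat.pow_le_pow_right two_pos (by omega)
  rw [hm, ← hn, mul_comm 2 (j + 1), pow_mul, pow_succ 2 j]
  rcases hk with rfl | rfl <;> push_cast [hle] <;> ring

lemma two_pow_two_mul_add_one_sub (j : ℕ) :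
    2 ^ (2 * j + 1) - 2 ^ j = 2 ^ j * (2 ^ (j + 1) - 1) := by
  rw [Nat.mul_sub_one, ← pow_add]
  congr 2
  omega

variable {m e : ℕ}

lemma even_of_even_div_gcd (h : Even (m / m.gcd e)) : Even m :=
  Nat.div_mul_cancel (Nat.gcd_dvd_left m e) ▸ h.mul_right _

lemma gcd_two_mul_of_even_div_gcd (h : Even (m / m.gcd e)) :
    m.gcd (2 * e) = 2 * m.gcd e := by
  obtain ⟨r, s, hrs, hm, he⟩ := Nat.exists_coprime m e
  rcases (m.gcd e).eq_zero_or_pos with hd | hd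
  · rw [Nat.gcd_eq_zero_iff] at hd
    simp [hd]
  have hr : m / m.gcd e = r := Nat.div_eq_of_eq_mul_left hd hm
  obtain ⟨k, rfl⟩ := hr ▸ h
  have hks : k.Coprime s := hrs.coprime_dvd_left ⟨2, by ring⟩
  generalize m.gcd e = d at *
  rw [hm, he, show (k + k) * d = 2 * d * k by ring, show 2 * (s * d) = 2 * d * s by ring,
    Nat.gcd_mul_left, hks, mul_one]

lemma one_add_pow_gcd_dvd_gcd (p : ℕ) (hm : m ≠ 0) (heven : Even (m / m.gcd e)) :
    1 + p ^ m.gcd e ∣ (p ^ m - 1).gcd (1 + p ^ e) := by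
  have hd : 0 < m.gcd e := Nat.gcd_pos_of_pos_left e (Nat.pos_of_ne_zero hm)
  have hodd : Odd (e / m.gcd e) :=
    ((Nat.coprime_div_gcd_div_gcd hd).coprime_dvd_left heven.two_dvd).odd_of_left
  refine Nat.dvd_gcd ?_ ?_
  · obtain ⟨r, hr⟩ := heven
    have hpow : ((p ^ m.gcd e) ^ 2) ^ r = p ^ m := by
      rw [← pow_mul, ← pow_mul, two_mul, ← hr, Nat.mul_div_cancel' (Nat.gcd_dvd_left m e)]
    calc 1 + p ^ m.gcd e ∣ (p ^ m.gcd e) ^ 2 - 1 ^ 2 := by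
          rw [Nat.sq_sub_sq, add_comm]
          exact dvd_mul_right _ _
      _ ∣ p ^ m - 1 := by
        rw [← hpow]
        simpa only [one_pow] using Nat.sub_dvd_pow_sub_pow ((p ^ m.gcd e) ^ 2) 1 r
  · simpa [← pow_mul, Nat.mul_div_cancel' (Nat.gcd_dvd_right m e)] using
      Odd.nat_add_dvd_pow_add_pow 1 (p ^ m.gcd e) hodd

end Arithmetic

section FixedPoints

lemma card_pow_pow_eq_self {F : Type*} [Field F] [Finite F] {p m : ℕ}
    (hF : Nat.card F = p ^ m) (k : ℕ) :
    Nat.card {x : F // x ^ p ^ k = x} = p ^ m.gcd k := by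
  have hp : 0 < p := Nat.pos_of_ne_zero fun hp => by
    have := Finite.one_lt_card (α := F)
    subst hp
    rcases m with _ | m <;> simp_all
  have hpk : p ^ k ≠ 0 := (pow_pos hp k).ne'
  let U : Subgroup Fˣ := (powMonoidHom (p ^ k - 1)).ker
  have hunits : {x : F | x ^ p ^ k = x} = insert 0 ((↑) '' (U : Set Fˣ)) := by
    ext x
    rcases eq_or_ne x 0 with rfl | hx
    · simp only [Set.mem_ofPred_eq, zero_pow hpk, Set.mem_insert_iff, true_or]
    · lift x to Fˣ using hx.isUnit
      simp [U, Units.val_inj, ← Units.val_pow_eq_pow_val, ← pow_sub_one_mul hpk (x : F),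
        MonoidHom.mem_ker]
  calc Nat.card {x : F // x ^ p ^ k = x}
      = (insert 0 ((↑) '' (U : Set Fˣ)) : Set F).ncard := by
        rw [← hunits]
        rfl
    _ = Nat.card U + 1 := by
        rw [Set.ncard_insert_of_notMem (by simp),
          Set.ncard_image_of_injective _ Units.val_injective]
        rfl
    _ = p ^ m.gcd k := by
        rw [IsCyclic.card_powMonoidHom_ker, Nat.card_units, hF, Nat.pow_sub_one_gcd_pow_sub_one,
          Nat.sub_add_cancel (Nat.one_le_pow _ _ hp)]

end FixedPoints

section MinimalPolynomials

lemma coprime_of_orderOf_dvd_orderOf_pow {G : Type*} [Monoid G] {x : G} (hx : orderOf x ≠ 0)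
    {s : ℕ} (h : orderOf x ∣ orderOf (x ^ s)) : (orderOf x).Coprime s := by
  rcases eq_or_ne s 0 with rfl | hs
  · simpa using h
  rw [orderOf_pow' x hs] at h
  have hdiv := Nat.dvd_antisymm (Nat.div_dvd_of_dvd (Nat.gcd_dvd_left (orderOf x) s)) h
  exact (Nat.div_eq_self.1 hdiv).resolve_left hx

lemma orderOf_dvd_orderOf_of_minpoly_dvd {K L : Type*} [Field K] [CommRing L] [Algebra K L]
    {x y : L} (h : minpoly K x ∣ minpoly K y) : orderOf x ∣ orderOf y := by
  have hy : minpoly K y ∣ X ^ orderOf y - 1 := by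
    rw [minpoly.dvd_iff]
    simp [pow_orderOf_eq_one]
  rw [orderOf_dvd_iff_pow_eq_one, ← sub_eq_zero]
  simpa using minpoly.dvd_iff.1 (h.trans hy)

lemma isCoprime_minpoly_minpoly_pow {m e : ℕ} {L : Type*} [Field L] [Algebra (ZMod 2) L]
    [Finite L] {α : L} (hm : m ≠ 0) (heven : Even (m / m.gcd e)) (hα : orderOf α = 2 ^ m - 1) :
    IsCoprime (minpoly (ZMod 2) α) (minpoly (ZMod 2) (α ^ (1 + 2 ^ e))) := by
  have hirr := minpoly.irreducible (Algebra.IsIntegral.isIntegral (R := ZMod 2) α)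
  refine (EuclideanDomain.dvd_or_coprime _ _ hirr).resolve_left fun h => ?_
  have hpos : 0 < 2 ^ m - 1 := Nat.sub_pos_of_lt (Nat.one_lt_two_pow hm)
  have hcop := coprime_of_orderOf_dvd_orderOf_pow (hα ▸ hpos.ne')
    (orderOf_dvd_orderOf_of_minpoly_dvd h)
  have hdvd := one_add_pow_gcd_dvd_gcd 2 hm heven
  rw [← hα, hcop, Nat.dvd_one] at hdvd
  have : 0 < 2 ^ m.gcd e := by positivity
  omega

end MinimalPolynomials

section Signs

/-- The nontrivial additive character `c ↦ (-1) ^ c` of `ZMod 2`, with integer values. -/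
def signChar : AddChar (ZMod 2) ℤ :=
  AddChar.zmodChar 2 (ζ := -1) (by norm_num)

lemma signChar_one : signChar 1 = -1 := by decide

lemma signChar_sq (c : ZMod 2) : signChar c ^ 2 = 1 := by
  revert c; decide

lemma signChar_eq_one_sub_ite (c : ZMod 2) : signChar c = 1 - 2 * if c ≠ 0 then 1 else 0 := by
  revert c; decide

/-- The exponential sum `∑ x, (-1) ^ f x`. -/
def signSum {X : Type*} [Fintype X] (f : X → ZMod 2) : ℤ :=
  ∑ x, signChar (f x)

lemma signSum_eq_card_sub {X : Type*} [Fintype X] (f : X → ZMod 2) :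
    signSum f = Fintype.card X - 2 * hammingNorm f := by
  simp only [signSum, signChar_eq_one_sub_ite, sum_sub_distrib, ← mul_sum, sum_boole, hammingNorm]
  simp

lemma signSum_addMonoidHom {G : Type*} [AddCommGroup G] [Fintype G] (g : G →+ ZMod 2) :
    signSum g = if g = 0 then (Fintype.card G : ℤ) else 0 := by
  classical
  have hg : signChar.compAddMonoidHom g = 0 ↔ g = 0 := by
    have hker : ∀ c : ZMod 2, signChar c = 1 ↔ c = 0 := by decide
    simp [DFunLike.ext_iff, hker]
  simpa only [hg] using! AddChar.sum_eq_ite (signChar.compAddMonoidHom g)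

end Signs

section QuadraticFunctions

variable {V : Type*} [AddCommGroup V] [Fintype V] {f : V → ZMod 2} {B : V →+ V →+ ZMod 2}

lemma signSum_sq_eq_sum_ker (hf : ∀ x z, f (x + z) = f x + f z + B z x) [Fintype B.ker] :
    signSum f ^ 2 = Fintype.card V * signSum fun z : B.ker => f z := by
  classical
  have hfB : ∀ z x, signChar (f x) * signChar (f (x + z)) = signChar (f z) * signChar (B z x) := by
    intro z x
    rw [← AddChar.map_add_eq_mul, ← AddChar.map_add_eq_mul, hf, ← add_assoc, ← add_assoc,
      ZModModule.add_self, zero_add]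
  calc signSum f ^ 2
      = ∑ x, ∑ z, signChar (f x) * signChar (f (x + z)) := by
        rw [sq, signSum, sum_mul_sum]
        exact sum_congr rfl fun x _ =>
          (Equiv.sum_comp (Equiv.addLeft x) fun y => signChar (f x) * signChar (f y)).symm
    _ = ∑ z, signChar (f z) * signSum (B z) := by
        rw [sum_comm]
        simp only [hfB, signSum, mul_sum]
    _ = ∑ z with z ∈ B.ker, Fintype.card V * signChar (f z) := by
        simp only [signSum_addMonoidHom, sum_filter, AddMonoidHom.mem_ker, mul_ite, mul_zero]
        simp only [mul_comm]
    _ = Fintype.card V * signSum fun z : B.ker => f z := by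
        rw [signSum, mul_sum]
        exact sum_subtype _ (by simp) _

lemma signSum_sq_eq_zero_or (hf : ∀ x z, f (x + z) = f x + f z + B z x) :
    signSum f ^ 2 = 0 ∨ signSum f ^ 2 = Fintype.card V * Nat.card B.ker := by
  have := Fintype.ofFinite B.ker
  let g : B.ker →+ ZMod 2 := AddMonoidHom.mk' (fun z => f z) fun x z => by
    rw [AddSubgroup.coe_add, hf, B.mem_ker.1 z.2, AddMonoidHom.zero_apply, add_zero]
  have hg : signSum f ^ 2 = Fintype.card V * signSum g := signSum_sq_eq_sum_ker hf
  rw [hg, signSum_addMonoidHom, Nat.card_eq_fintype_card]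
  split_ifs <;> simp

end QuadraticFunctions

section Trace

variable {F : Type*} [Field F] [Algebra (ZMod 2) F]

local notation "Tr" => Algebra.trace (ZMod 2) F

lemma add_trace_polar {f : F → ZMod 2} {B : F →+ F →+ ZMod 2}
    (hf : ∀ x z, f (x + z) = f x + f z + B z x) (b x z : F) :
    f (x + z) + Tr (b * (x + z)) = f x + Tr (b * x) + (f z + Tr (b * z)) + B z x := by
  rw [hf, mul_add, map_add]
  ring

variable [Finite F]

lemma eq_zero_of_forall_trace_mul_eq_zero {u : F} (h : ∀ x, Tr (u * x) = 0) : u = 0 :=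
  (traceForm_nondegenerate (ZMod 2) F).1 u h

lemma trace_pow_two_pow (x : F) (e : ℕ) : Tr (x ^ 2 ^ e) = Tr x := by
  induction e with
  | zero => simp
  | succ e ih =>
    rw [pow_succ, pow_mul, ← ih]
    simpa using Algebra.trace_eq_of_algEquiv (FiniteField.frobeniusAlgEquivOfAlgebraic (ZMod 2) F)
      (x ^ 2 ^ e)

end Trace

section TwistedSums

variable {F : Type*} [Field F] [Fintype F] [Algebra (ZMod 2) F]

local notation "Tr" => Algebra.trace (ZMod 2) F

lemma signSum_trace_mul [DecidableEq F] (u : F) :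
    signSum (fun b => Tr (b * u)) = if u = 0 then (Fintype.card F : ℤ) else 0 := by
  let g : F →+ ZMod 2 := (Tr).toAddMonoidHom.comp (AddMonoidHom.mulRight u)
  have hg : g = 0 ↔ u = 0 := by
    refine ⟨fun h => eq_zero_of_forall_trace_mul_eq_zero fun x => ?_, ?_⟩
    · simpa [g, mul_comm] using DFunLike.congr_fun h x
    · rintro rfl
      ext
      simp [g]
  exact (signSum_addMonoidHom g).trans (by simp only [hg])

lemma sum_signSum_add_trace_sq (f : F → ZMod 2) :
    ∑ b, signSum (fun x => f x + Tr (b * x)) ^ 2 = (Fintype.card F : ℤ) ^ 2 := by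
  classical
  have hχ : ∀ b x y, signChar (f x + Tr (b * x)) * signChar (f y + Tr (b * y)) =
      signChar (f x) * signChar (f y) * signChar (Tr (b * (x - y))) := by
    intro b x y
    rw [mul_sub, map_sub, ZModModule.sub_eq_add]
    simp only [AddChar.map_add_eq_mul]
    ring
  calc ∑ b, signSum (fun x => f x + Tr (b * x)) ^ 2
      = ∑ x, ∑ y, signChar (f x) * signChar (f y) * signSum fun b => Tr (b * (x - y)) := by
        simp only [sq, signSum, sum_mul_sum, hχ]
        simp only [mul_sum]
        rw [sum_comm]
        exact sum_congr rfl fun x _ => sum_comm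
    _ = ∑ x : F, signChar (f x) ^ 2 * Fintype.card F := by
        simp only [signSum_trace_mul, sub_eq_zero, mul_ite, mul_zero, sum_ite_eq, mem_univ,
          if_true, sq]
    _ = (Fintype.card F : ℤ) ^ 2 := by
        simp [signChar_sq, sq (Fintype.card F : ℤ)]

lemma card_signSum_ne_zero_mul_card_ker {f : F → ZMod 2} {B : F →+ F →+ ZMod 2}
    (hf : ∀ x z, f (x + z) = f x + f z + B z x) :
    #{b | signSum (fun x => f x + Tr (b * x)) ≠ 0} * Nat.card B.ker = Fintype.card F := by
  have hb : ∀ b, signSum (fun x => f x + Tr (b * x)) ^ 2 =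
      if signSum (fun x => f x + Tr (b * x)) ≠ 0 then
        (Fintype.card F : ℤ) * Nat.card B.ker else 0 := by
    intro b
    split_ifs with h
    · exact (signSum_sq_eq_zero_or (add_trace_polar hf b)).resolve_left (pow_ne_zero 2 h)
    · rw [not_not.1 h, zero_pow two_ne_zero]
  have hsum := sum_signSum_add_trace_sq f
  rw [sum_congr rfl fun b _ => hb b, ← sum_filter, sum_const, nsmul_eq_mul, sq] at hsum
  have hq : (Fintype.card F : ℤ) ≠ 0 := by exact_mod_cast Fintype.card_ne_zero
  zify
  exact mul_left_cancel₀ hq (by linear_combination hsum)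

end TwistedSums

section GoldFunctions

variable {F : Type*} [Field F] [Algebra (ZMod 2) F] {m : ℕ}

local notation "Tr" => Algebra.trace (ZMod 2) F

lemma add_pow_two_pow (e : ℕ) (x y : F) : (x + y) ^ 2 ^ e = x ^ 2 ^ e + y ^ 2 ^ e := by
  have := charP_of_injective_algebraMap' (A := F) (ZMod 2) 2
  exact add_pow_char_pow x y 2 e

/-- The polar form `(z, x) ↦ Tr (a (x z ^ (2 ^ e) + z x ^ (2 ^ e)))` of the Gold function
`x ↦ Tr (a x ^ (1 + 2 ^ e))`. -/
noncomputable def goldPolar (e : ℕ) (a : F) : F →+ F →+ ZMod 2 :=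
  AddMonoidHom.mk' (fun z => AddMonoidHom.mk' (fun x => Tr (a * (x * z ^ 2 ^ e + z * x ^ 2 ^ e)))
    fun x y => by rw [← map_add, add_pow_two_pow]; congr 1; ring)
    fun z w => by
      ext x
      simp only [AddMonoidHom.mk'_apply, AddMonoidHom.add_apply, ← map_add, add_pow_two_pow]
      congr 1
      ring

lemma goldPolar_apply (e : ℕ) (a z x : F) :
    goldPolar e a z x = Tr (a * (x * z ^ 2 ^ e + z * x ^ 2 ^ e)) :=
  rfl

lemma trace_mul_add_pow (e : ℕ) (a x z : F) : Tr (a * (x + z) ^ (1 + 2 ^ e)) =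
    Tr (a * x ^ (1 + 2 ^ e)) + Tr (a * z ^ (1 + 2 ^ e)) + goldPolar e a z x := by
  rw [goldPolar_apply, ← map_add, ← map_add]
  simp only [pow_add, pow_one, add_pow_two_pow]
  congr 1
  ring

variable [Finite F]

lemma goldPolar_eq_trace_mul_pow (e : ℕ) (a z x : F) :
    goldPolar e a z x = Tr ((a ^ 2 ^ e * z ^ 2 ^ (2 * e) - a * z) * x ^ 2 ^ e) := by
  have h : Tr (a * (x * z ^ 2 ^ e)) = Tr (a ^ 2 ^ e * z ^ 2 ^ (2 * e) * x ^ 2 ^ e) := by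
    rw [← trace_pow_two_pow _ e, mul_pow, mul_pow, ← pow_mul, ← pow_add, ← two_mul, mul_assoc,
      mul_comm (x ^ 2 ^ e)]
  rw [goldPolar_apply, mul_add, map_add, h, sub_mul, map_sub, ZModModule.sub_eq_add, mul_assoc a z]

lemma mem_ker_goldPolar {e : ℕ} {a z : F} :
    z ∈ (goldPolar e a).ker ↔ a ^ 2 ^ e * z ^ 2 ^ (2 * e) = a * z := by
  rw [AddMonoidHom.mem_ker, DFunLike.ext_iff, ← sub_eq_zero (a := a ^ 2 ^ e * _)]
  simp only [goldPolar_eq_trace_mul_pow, AddMonoidHom.zero_apply]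
  refine ⟨fun h => eq_zero_of_forall_trace_mul_eq_zero fun y => ?_, fun h x => by
    rw [h, zero_mul, map_zero]⟩
  have := charP_of_injective_algebraMap' (A := F) (ZMod 2) 2
  obtain ⟨x, rfl⟩ := (bijective_iterateFrobenius F 2 e).surjective y
  exact h x

lemma ker_goldPolar_zero (e : ℕ) : (goldPolar e (0 : F)).ker = ⊤ := by
  ext z
  simp only [mem_ker_goldPolar, zero_mul, zero_pow (pow_ne_zero e two_ne_zero),
    AddSubgroup.mem_top]

lemma card_ker_goldPolar_eq_or (hF : Nat.card F = 2 ^ m) (e : ℕ) {a : F} (ha : a ≠ 0) :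
    Nat.card (goldPolar e a).ker = 1 ∨ Nat.card (goldPolar e a).ker = 2 ^ m.gcd (2 * e) := by
  by_cases h : (goldPolar e a).ker = ⊥
  · exact .inl ((AddSubgroup.eq_bot_iff_card _).1 h)
  obtain ⟨⟨z₀, hker⟩, hz₀⟩ := AddSubgroup.ne_bot_iff_exists_ne_zero.1 h
  replace hz₀ : z₀ ≠ 0 := fun h => hz₀ (Subtype.ext h)
  replace hker : a ^ 2 ^ e * z₀ ^ 2 ^ (2 * e) = a * z₀ := mem_ker_goldPolar.1 hker
  right
  rw [← card_pow_pow_eq_self hF]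
  refine (Nat.card_congr ((Equiv.mulRight₀ z₀ hz₀).subtypeEquiv fun w => ?_)).symm
  rw [Equiv.mulRight₀_apply, mem_ker_goldPolar, mul_pow, mul_left_comm, hker, mul_left_comm a,
    mul_left_inj' (mul_ne_zero ha hz₀)]

end GoldFunctions

section GoldKernelSizes

variable {F : Type*} [Field F] [Fintype F] [Algebra (ZMod 2) F] {m e : ℕ}

lemma sum_card_ker_goldPolar (hF : Nat.card F = 2 ^ m) (e : ℕ) :
    ∑ a : F, Nat.card (goldPolar e a).ker = 2 ^ m + (2 ^ m - 1) * 2 ^ m.gcd e := by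
  classical
  have hcard : ∀ a : F, Nat.card (goldPolar e a).ker = #{z | z ∈ (goldPolar e a).ker} :=
    fun a => Nat.subtype_card _ (by simp)
  have hz : ∀ z : F, z ≠ 0 → #{a | z ∈ (goldPolar e a).ker} = 2 ^ m.gcd e := by
    intro z hz
    rw [← card_pow_pow_eq_self hF, ← Nat.subtype_card _ (fun _ => mem_filter_univ _)]
    have hz' : z ^ (2 ^ e + 1) ≠ 0 := pow_ne_zero _ hz
    refine Nat.card_congr ((Equiv.mulRight₀ _ hz').subtypeEquiv fun a => ?_)
    have hpow : (a * z ^ (2 ^ e + 1)) ^ 2 ^ e = a ^ 2 ^ e * z ^ 2 ^ (2 * e) * z ^ 2 ^ e := by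
      rw [mul_pow, ← pow_mul, add_mul, one_mul, ← pow_add, ← two_mul, pow_add, mul_assoc]
    have hmul : a * z ^ (2 ^ e + 1) = a * z * z ^ 2 ^ e := by rw [pow_succ', mul_assoc]
    rw [mem_ker_goldPolar, ← mul_left_inj' (pow_ne_zero (2 ^ e) hz), ← hpow, ← hmul]
    rfl
  calc ∑ a : F, Nat.card (goldPolar e a).ker
      = ∑ z : F, #{a | z ∈ (goldPolar e a).ker} := by
        simp only [hcard, card_filter]
        exact sum_comm
    _ = #{a : F | 0 ∈ (goldPolar e a).ker} + ∑ z ∈ univ.erase (0 : F), 2 ^ m.gcd e := by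
        rw [← add_sum_erase univ _ (mem_univ 0)]
        exact congrArg _ (sum_congr rfl fun z h => hz z (ne_of_mem_erase h))
    _ = 2 ^ m + (2 ^ m - 1) * 2 ^ m.gcd e := by
        simp [zero_mem, ← hF]

lemma sum_comp_card_ker_goldPolar {M : Type*} [AddCommMonoid M] (hF : Nat.card F = 2 ^ m)
    (heven : Even (m / m.gcd e)) (hlt : 2 * m.gcd e < m) (g : ℕ → M) :
    ∑ a : F, g (Nat.card (goldPolar e a).ker) =
      g (2 ^ m) + (#{a : F | Nat.card (goldPolar e a).ker = 1} • g 1 +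
        #{a : F | Nat.card (goldPolar e a).ker = 2 ^ (2 * m.gcd e)} • g (2 ^ (2 * m.gcd e))) := by
  have hd : 0 < m.gcd e := Nat.gcd_pos_of_pos_left e (by omega)
  have hlt' : 2 ^ (2 * m.gcd e) < 2 ^ m := Nat.pow_lt_pow_right one_lt_two hlt
  have hlt'' : 1 < 2 ^ (2 * m.gcd e) := Nat.one_lt_two_pow (by omega)
  have hzero : Nat.card (goldPolar e (0 : F)).ker = 2 ^ m := by
    rw [ker_goldPolar_zero, AddSubgroup.card_top, hF]
  have hne : ∀ a : F, a ≠ 0 → Nat.card (goldPolar e a).ker = 1 ∨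
      Nat.card (goldPolar e a).ker = 2 ^ (2 * m.gcd e) := fun a ha =>
    gcd_two_mul_of_even_div_gcd heven ▸ card_ker_goldPolar_eq_or hF e ha
  have hmaps : ∀ a ∈ (univ : Finset F),
      Nat.card (goldPolar e a).ker ∈ ({2 ^ m, 1, 2 ^ (2 * m.gcd e)} : Finset ℕ) := by
    intro a _
    rcases eq_or_ne a 0 with rfl | ha
    · simp only [hzero, mem_insert, true_or]
    · simp only [mem_insert, mem_singleton, hne a ha, or_true]
  have htop : ({a : F | Nat.card (goldPolar e a).ker = 2 ^ m} : Finset F) = {0} := by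
    ext a
    rw [mem_filter_univ, mem_singleton]
    refine ⟨fun h => by_contra fun ha => ?_, fun h => h ▸ hzero⟩
    rcases hne a ha with h' | h' <;> omega
  have hfib : ∀ j, ∑ a : F with Nat.card (goldPolar e a).ker = j,
      g (Nat.card (goldPolar e a).ker) = #{a : F | Nat.card (goldPolar e a).ker = j} • g j :=
    fun j => sum_eq_card_nsmul fun a ha => congrArg g ((mem_filter_univ a).1 ha)
  have hnotMem : 2 ^ m ∉ ({1, 2 ^ (2 * m.gcd e)} : Finset ℕ) := by
    simp only [mem_insert, mem_singleton]
    omega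
  rw [← sum_fiberwise_of_maps_to hmaps, sum_insert hnotMem, sum_pair hlt''.ne]
  simp only [hfib, htop, sum_singleton, hzero]

lemma card_card_ker_goldPolar (hF : Nat.card F = 2 ^ m)
    (heven : Even (m / m.gcd e)) (hlt : 2 * m.gcd e < m) :
    #{a : F | Nat.card (goldPolar e a).ker = 1} * (2 ^ m.gcd e + 1) =
        (2 ^ m - 1) * 2 ^ m.gcd e ∧
      #{a : F | Nat.card (goldPolar e a).ker = 2 ^ (2 * m.gcd e)} * (2 ^ m.gcd e + 1) =
        2 ^ m - 1 := by
  have hd : 0 < m.gcd e := Nat.gcd_pos_of_pos_left e (by omega)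
  have hone := sum_comp_card_ker_goldPolar hF heven hlt fun _ => 1
  have hid := sum_comp_card_ker_goldPolar hF heven hlt fun r => r
  rw [sum_const, card_univ, ← Nat.card_eq_fintype_card, hF] at hone
  rw [sum_card_ker_goldPolar hF] at hid
  simp only [smul_eq_mul, mul_one] at hone hid
  generalize #{a : F | Nat.card (goldPolar e a).ker = 1} = A at *
  generalize #{a : F | Nat.card (goldPolar e a).ker = 2 ^ (2 * m.gcd e)} = R at *
  have hq : (1 : ℕ) ≤ 2 ^ m := Nat.one_le_two_pow
  have hD : (2 : ℤ) ^ m.gcd e - 1 ≠ 0 := by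
    have : (2 : ℤ) ≤ 2 ^ m.gcd e := by exact_mod_cast Nat.le_self_pow hd.ne' 2
    omega
  rw [mul_comm 2, pow_mul] at hid
  zify [hq] at hone hid ⊢
  have hR : R * ((2 : ℤ) ^ m.gcd e + 1) = 2 ^ m - 1 :=
    mul_left_cancel₀ hD (by linear_combination hone - hid)
  exact ⟨by linear_combination (2 ^ m.gcd e + 1) * -hone - hR, hR⟩

end GoldKernelSizes

section GoldCode

variable {F : Type*} [Field F] [Algebra (ZMod 2) F] {m e : ℕ}

local notation "Tr" => Algebra.trace (ZMod 2) F

/-- The function `x ↦ Tr (a x ^ (1 + 2 ^ e)) + Tr (b x) + c` as a linear map in `(a, b, c)`. Its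
range is the dual of the extended cyclic code with zeros `α` and `α ^ (1 + 2 ^ e)`. -/
noncomputable def goldMap (F : Type*) [Field F] [Algebra (ZMod 2) F] (e : ℕ) :
    F × F × ZMod 2 →ₗ[ZMod 2] F → ZMod 2 where
  toFun p x := Algebra.trace (ZMod 2) F (p.1 * x ^ (1 + 2 ^ e)) +
    Algebra.trace (ZMod 2) F (p.2.1 * x) + p.2.2
  map_add' p p' := by
    ext x
    simp only [Prod.fst_add, Prod.snd_add, add_mul, map_add, Pi.add_apply]
    ring
  map_smul' r p := by
    ext x
    simp only [Prod.smul_fst, Prod.smul_snd, smul_mul_assoc, map_smul, Pi.smul_apply, smul_add,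
      RingHom.id_apply]

lemma goldMap_apply (e : ℕ) (a b : F) (c : ZMod 2) (x : F) :
    goldMap F e (a, b, c) x = Tr (a * x ^ (1 + 2 ^ e)) + Tr (b * x) + c :=
  rfl

lemma sum_goldMap_mul {ι : Type*} [Fintype ι] (e : ℕ) (p : F × F × ZMod 2) (x : ι → F)
    (c : ι → ZMod 2) :
    ∑ i, goldMap F e p (x i) * c i =
      Tr (p.1 * ∑ i, c i • x i ^ (1 + 2 ^ e)) +
        Tr (p.2.1 * ∑ i, c i • x i) + p.2.2 * ∑ i, c i := by
  obtain ⟨a, b, r⟩ := p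
  simp only [goldMap_apply, mul_sum, map_sum, mul_smul_comm, map_smul, smul_eq_mul, add_mul,
    sum_add_distrib, mul_comm (c _)]

variable [Finite F]

lemma forall_sum_goldMap_mul_eq_zero_iff {ι : Type*} [Fintype ι] (e : ℕ) (x : ι → F)
    (c : ι → ZMod 2) :
    (∀ p, ∑ i, goldMap F e p (x i) * c i = 0) ↔
      (∑ i, c i • x i = 0 ∧ ∑ i, c i • x i ^ (1 + 2 ^ e) = 0) ∧ ∑ i, c i = 0 := by
  simp only [sum_goldMap_mul]
  refine ⟨fun h => ⟨⟨?_, ?_⟩, ?_⟩, fun h p => by simp [h]⟩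
  · exact eq_zero_of_forall_trace_mul_eq_zero fun b => by simpa [mul_comm] using h (0, b, 0)
  · exact eq_zero_of_forall_trace_mul_eq_zero fun a => by simpa [mul_comm] using h (a, 0, 0)
  · simpa using h (0, 0, 1)

lemma goldMap_comp_affine (e : ℕ) (p : F × F × ZMod 2) (u v : F) :
    ∃ p', ∀ x, goldMap F e p' x = goldMap F e p (x * u + v) := by
  obtain ⟨a, b, c⟩ := p
  have := charP_of_injective_algebraMap' (A := F) (ZMod 2) 2
  obtain ⟨y, hy⟩ := (bijective_iterateFrobenius F 2 e).surjective (a * v * u ^ 2 ^ e)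
  rw [iterateFrobenius_def] at hy
  have hpolar : ∀ x, goldPolar e a v (x * u) = Tr ((a * u * v ^ 2 ^ e + y) * x) := by
    intro x
    rw [goldPolar_apply, add_mul, mul_add, map_add, map_add, ← trace_pow_two_pow (y * x) e,
      mul_pow y, hy, mul_pow]
    congr 2 <;> ring
  refine ⟨(a * u ^ (1 + 2 ^ e), a * u * v ^ 2 ^ e + y + b * u, goldMap F e (a, b, c) v),
    fun x => ?_⟩
  have ha : a * u ^ (1 + 2 ^ e) * x ^ (1 + 2 ^ e) = a * (x * u) ^ (1 + 2 ^ e) := by ring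
  have hb : b * u * x = b * (x * u) := by ring
  simp only [goldMap_apply, trace_mul_add_pow, hpolar, ha, add_mul _ (b * u), hb, mul_add b,
    map_add]
  ring

lemma goldMap_injective (hF : Nat.card F = 2 ^ m) (heven : Even (m / m.gcd e))
    (hlt : 2 * m.gcd e < m) : Function.Injective (goldMap F e) := by
  rw [injective_iff_map_eq_zero]
  rintro ⟨a, b, c⟩ h
  have h' : ∀ x, Tr (a * x ^ (1 + 2 ^ e)) + Tr (b * x) + c = 0 := congrFun h
  have hc : c = 0 := by simpa using h' 0
  subst hc
  have hlin : ∀ x, Tr (a * x ^ (1 + 2 ^ e)) = Tr (b * x) := fun x =>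
    CharTwo.add_eq_zero.1 ((add_zero _).symm.trans (h' x))
  have hker : (goldPolar e a).ker = ⊤ := by
    refine (AddSubgroup.eq_top_iff' _).2 fun z => AddMonoidHom.mem_ker.2 ?_
    ext x
    simpa only [hlin, mul_add, map_add, left_eq_add, AddMonoidHom.zero_apply] using
      trace_mul_add_pow e a x z
  have ha : a = 0 := by
    by_contra ha
    have hcard := card_ker_goldPolar_eq_or hF e ha
    rw [hker, AddSubgroup.card_top, hF, gcd_two_mul_of_even_div_gcd heven] at hcard
    have hlt' : 2 ^ (2 * m.gcd e) < 2 ^ m := Nat.pow_lt_pow_right one_lt_two hlt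
    have hone : 1 < 2 ^ m := Nat.one_lt_two_pow (by omega)
    omega
  subst ha
  have hb : b = 0 := eq_zero_of_forall_trace_mul_eq_zero (by simpa using h')
  rw [hb]
  rfl

lemma exists_perm_preserving_range_goldMap (e : ℕ) (T T' : Finset F) (hT : #T = 2)
    (hT' : #T' = 2) : ∃ σ : Equiv.Perm F, T.map σ.toEmbedding = T' ∧
      ∀ y ∈ Set.range (goldMap F e), y ∘ σ ∈ Set.range (goldMap F e) := by
  classical
  obtain ⟨s, t, hst, rfl⟩ := card_eq_two.1 hT
  obtain ⟨s', t', hst', rfl⟩ := card_eq_two.1 hT'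
  have hsub : s - t ≠ 0 := sub_ne_zero.2 hst
  have hu : (s' - t') / (s - t) ≠ 0 := div_ne_zero (sub_ne_zero.2 hst') hsub
  generalize hu' : (s' - t') / (s - t) = u at hu
  rw [div_eq_iff hsub] at hu'
  refine ⟨(Equiv.mulRight₀ u hu).trans (Equiv.addRight (s' - s * u)), ?_, ?_⟩
  · have hs : s * u + (s' - s * u) = s' := by ring
    have ht : t * u + (s' - s * u) = t' := by linear_combination hu'
    simp [map_insert, map_singleton, hs, ht]
  · rintro _ ⟨p, rfl⟩
    obtain ⟨p', hp'⟩ := goldMap_comp_affine e p u (s' - s * u)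
    exact ⟨p', funext hp'⟩

end GoldCode

section GoldSums

variable {F : Type*} [Field F] [Fintype F] [Algebra (ZMod 2) F] {e : ℕ}

local notation "Tr" => Algebra.trace (ZMod 2) F

/-- The Weil sum `∑ x, (-1) ^ Tr (a x ^ (1 + 2 ^ e) + b x)`. -/
noncomputable def goldSum (e : ℕ) (a b : F) : ℤ :=
  signSum fun x => Tr (a * x ^ (1 + 2 ^ e)) + Tr (b * x)

lemma card_goldSum_ne_zero_mul_card_ker (e : ℕ) (a : F) :
    #{b | goldSum e a b ≠ 0} * Nat.card (goldPolar e a).ker = Fintype.card F :=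
  card_signSum_ne_zero_mul_card_ker (trace_mul_add_pow e a)

lemma goldSum_sq {a b : F} (h : goldSum e a b ≠ 0) :
    goldSum e a b ^ 2 = Fintype.card F * Nat.card (goldPolar e a).ker :=
  (signSum_sq_eq_zero_or (add_trace_polar (f := fun x => Tr (a * x ^ (1 + 2 ^ e)))
    (trace_mul_add_pow e a) b)).resolve_left (pow_ne_zero 2 h)

lemma card_goldSum_eq_zero (e : ℕ) (a : F) :
    #{b | goldSum e a b = 0} = Fintype.card F - Fintype.card F / Nat.card (goldPolar e a).ker := by
  rw [← Nat.eq_div_of_mul_eq_left Nat.card_pos.ne' (card_goldSum_ne_zero_mul_card_ker e a),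
    ← card_univ, ← card_filter_add_card_filter_not (s := univ) (fun b => goldSum e a b = 0),
    Nat.add_sub_cancel]

lemma signSum_goldMap (e : ℕ) (a b : F) (c : ZMod 2) :
    signSum (goldMap F e (a, b, c)) = signChar c * goldSum e a b := by
  simp only [signSum, goldSum, goldMap_apply, AddChar.map_add_eq_mul, mul_sum]
  exact sum_congr rfl fun x _ => mul_comm _ _

lemma card_signSum_goldMap_eq_zero (e : ℕ) :
    #{p | signSum (goldMap F e p) = 0} = ∑ a : F, 2 * #{b | goldSum e a b = 0} := by
  have hχ : ∀ c, signChar c ≠ 0 := by decide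
  simp only [card_filter, Fintype.sum_prod_type, signSum_goldMap, mul_eq_zero, hχ, false_or,
    sum_const, card_univ, ZMod.card, smul_eq_mul, mul_sum]

lemma card_signSum_goldMap_eq (e : ℕ) {w : ℤ} (hw : w ≠ 0) :
    #{p | signSum (goldMap F e p) = w} = ∑ a : F, #{b | goldSum e a b ^ 2 = w ^ 2} := by
  have hχ : ∀ s : ℤ, (∑ c, if signChar c * s = w then 1 else 0) =
      if s ^ 2 = w ^ 2 then 1 else 0 := by
    intro s
    have huniv : (univ : Finset (ZMod 2)) = {0, 1} := by decide
    rw [huniv, sum_pair zero_ne_one, AddChar.map_zero_eq_one, signChar_one, one_mul, neg_one_mul]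
    simp only [sq_eq_sq_iff_eq_or_eq_neg]
    split_ifs <;> omega
  simp only [card_filter, Fintype.sum_prod_type, signSum_goldMap, hχ]

lemma card_signSum_goldMap_eq_mul (e : ℕ) {w : ℤ} (hw : w ≠ 0) {r : ℕ}
    (hr : w ^ 2 = Fintype.card F * r) :
    #{p | signSum (goldMap F e p) = w} * r =
      #{a : F | Nat.card (goldPolar e a).ker = r} * Fintype.card F := by
  have ha : ∀ a : F, #{b | goldSum e a b ^ 2 = w ^ 2} * r =
      if Nat.card (goldPolar e a).ker = r then Fintype.card F else 0 := by
    intro a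
    have hq : (Fintype.card F : ℤ) ≠ 0 := by exact_mod_cast Fintype.card_ne_zero
    have hsq : ∀ b, goldSum e a b ^ 2 = w ^ 2 ↔
        Nat.card (goldPolar e a).ker = r ∧ goldSum e a b ≠ 0 := by
      intro b
      rcases eq_or_ne (goldSum e a b) 0 with h | h
      · simp [h, (pow_ne_zero 2 hw).symm]
      · rw [goldSum_sq h, hr, mul_right_inj' hq, Nat.cast_inj, and_iff_left h]
    split_ifs with h
    · simp only [hsq, h, true_and]
      rw [← card_goldSum_ne_zero_mul_card_ker e a, h]
    · simp only [hsq, h, false_and, filter_false, card_empty, zero_mul]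
  rw [card_signSum_goldMap_eq e hw, sum_mul, sum_congr rfl fun a _ => ha a, ← sum_filter, sum_const,
    smul_eq_mul]

end GoldSums

section GoldDesigns

variable {F : Type*} [Field F] [Fintype F] [Algebra (ZMod 2) F] {m e k : ℕ} {T : Finset F}

lemma card_signSum_goldMap_eq_zero_eq (hF : Nat.card F = 2 ^ m) (heven : Even (m / m.gcd e))
    (hlt : 2 * m.gcd e < m) :
    #{p | signSum (goldMap F e p) = 0} =
      2 * (2 ^ m - 1) * ((2 ^ m.gcd e - 1) * 2 ^ (m - 2 * m.gcd e) + 1) := by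
  have hcard := (card_card_ker_goldPolar hF heven hlt).2
  have hq : 2 ^ m = 2 ^ (2 * m.gcd e) * 2 ^ (m - 2 * m.gcd e) := by
    rw [← pow_add, Nat.add_sub_cancel' hlt.le]
  have hdiv : 2 ^ m - 2 ^ m / 2 ^ (2 * m.gcd e) =
      (2 ^ m.gcd e + 1) * ((2 ^ m.gcd e - 1) * 2 ^ (m - 2 * m.gcd e)) := by
    rw [Nat.pow_div hlt.le two_pos, ← mul_assoc, ← Nat.sq_sub_sq, one_pow, ← pow_mul, mul_comm _ 2,
      Nat.sub_one_mul, ← hq]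
  rw [card_signSum_goldMap_eq_zero]
  simp only [card_goldSum_eq_zero]
  rw [sum_comp_card_ker_goldPolar hF heven hlt
    fun r => 2 * (Fintype.card F - Fintype.card F / r), ← Nat.card_eq_fintype_card, hF, hdiv,
    Nat.div_self (by positivity), Nat.div_one, Nat.sub_self, ← hcard]
  simp only [smul_eq_mul]
  ring

lemma ncard_codewordsThrough_range_goldMap (hF : Nat.card F = 2 ^ m) (heven : Even (m / m.gcd e))
    (hlt : 2 * m.gcd e < m) (k : ℕ) :
    (codewordsThrough (Set.range (goldMap F e)) k ∅).ncard =
      #{p | signSum (goldMap F e p) = 2 ^ m - 2 * k} := by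
  rw [← Set.ncard_coe_finset, ← Set.ncard_image_of_injective _ (goldMap_injective hF heven hlt)]
  congr 1
  ext y
  have hk : ∀ y : F → ZMod 2, signSum y = 2 ^ m - 2 * k ↔ hammingNorm y = k := by
    intro y
    rw [signSum_eq_card_sub, ← Nat.card_eq_fintype_card, hF]
    push_cast
    omega
  simp only [codewordsThrough, coe_filter, mem_univ, true_and, hk]
  constructor
  · rintro ⟨⟨p, rfl⟩, h, -⟩
    exact ⟨p, h, rfl⟩
  · rintro ⟨p, h, rfl⟩
    exact ⟨⟨p, rfl⟩, h, by simp⟩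

lemma pow_mul_ncard_codewordsThrough_range_goldMap (hF : Nat.card F = 2 ^ m)
    (heven : Even (m / m.gcd e)) (hlt : 2 * m.gcd e < m) (k : ℕ) (hT : #T = 2) :
    2 ^ m * (2 ^ m - 1) * (codewordsThrough (Set.range (goldMap F e)) k T).ncard =
      #{p | signSum (goldMap F e p) = 2 ^ m - 2 * k} * (k * (k - 1)) := by
  have h := descFactorial_mul_ncard_codewordsThrough (k := k)
    (exists_perm_preserving_range_goldMap e) hT
  rw [ncard_codewordsThrough_range_goldMap hF heven hlt, ← Nat.card_eq_fintype_card, hF] at h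
  simp only [Nat.descFactorial_succ, Nat.descFactorial_zero, Nat.sub_zero, mul_one] at h
  linear_combination h

lemma mul_ncard_codewordsThrough_of_sq_eq (hF : Nat.card F = 2 ^ m)
    (heven : Even (m / m.gcd e)) (hlt : 2 * m.gcd e < m) {r : ℕ} (hr : r ≠ 0)
    (hk : ((2 : ℤ) ^ m - 2 * k) ^ 2 = 2 ^ m * r) (hT : #T = 2) :
    (2 ^ m - 1) * (r * (codewordsThrough (Set.range (goldMap F e)) k T).ncard) =
      #{a : F | Nat.card (goldPolar e a).ker = r} * (k * (k - 1)) := by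
  have hw : (2 : ℤ) ^ m - 2 * k ≠ 0 := by
    intro h
    rw [h, zero_pow two_ne_zero, eq_comm] at hk
    simp [hr] at hk
  have hF' : Fintype.card F = 2 ^ m := Nat.card_eq_fintype_card.symm.trans hF
  have hcount := card_signSum_goldMap_eq_mul (F := F) e hw (r := r) (by rw [hk, hF']; norm_cast)
  have hpairs := pow_mul_ncard_codewordsThrough_range_goldMap hF heven hlt k hT
  rw [hF'] at hcount
  refine Nat.eq_of_mul_eq_mul_left (pow_pos two_pos m) ?_
  linear_combination r * hpairs + k * (k - 1) * hcount

theorem ncard_codewordsThrough_of_sq_eq_two_pow_add (hF : Nat.card F = 2 ^ m)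
    (heven : Even (m / m.gcd e)) (hlt : 2 * m.gcd e < m)
    (hk : ((2 : ℤ) ^ m - 2 * k) ^ 2 = 2 ^ (m + 2 * m.gcd e)) (hT : #T = 2) :
    2 ^ (2 * m.gcd e) * (2 ^ m.gcd e + 1) *
      (codewordsThrough (Set.range (goldMap F e)) k T).ncard = k * (k - 1) := by
  have hmul := mul_ncard_codewordsThrough_of_sq_eq hF heven hlt (pow_ne_zero _ two_ne_zero)
    (by exact_mod_cast hk.trans (pow_add _ _ _)) hT
  have hcard := (card_card_ker_goldPolar hF heven hlt).2
  have hpos : 0 < 2 ^ m - 1 := Nat.sub_pos_of_lt (Nat.one_lt_two_pow (by omega))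
  refine Nat.eq_of_mul_eq_mul_left hpos ?_
  linear_combination (2 ^ m.gcd e + 1) * hmul + k * (k - 1) * hcard

theorem ncard_codewordsThrough_of_sq_eq_two_pow (hF : Nat.card F = 2 ^ m)
    (heven : Even (m / m.gcd e)) (hlt : 2 * m.gcd e < m)
    (hk : ((2 : ℤ) ^ m - 2 * k) ^ 2 = 2 ^ m) (hT : #T = 2) :
    (2 ^ m.gcd e + 1) * (codewordsThrough (Set.range (goldMap F e)) k T).ncard =
      2 ^ m.gcd e * (k * (k - 1)) := by
  have hmul := mul_ncard_codewordsThrough_of_sq_eq hF heven hlt one_ne_zero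
    (by exact_mod_cast hk.trans (mul_one _).symm) hT
  have hcard := (card_card_ker_goldPolar hF heven hlt).1
  have hpos : 0 < 2 ^ m - 1 := Nat.sub_pos_of_lt (Nat.one_lt_two_pow (by omega))
  refine Nat.eq_of_mul_eq_mul_left hpos ?_
  linear_combination (2 ^ m.gcd e + 1) * hmul + k * (k - 1) * hcard

theorem ncard_codewordsThrough_two_pow_sub_one (hF : Nat.card F = 2 ^ m)
    (heven : Even (m / m.gcd e)) (hlt : 2 * m.gcd e < m) (hT : #T = 2) :
    (codewordsThrough (Set.range (goldMap F e)) (2 ^ (m - 1)) T).ncard =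
      ((2 ^ m.gcd e - 1) * 2 ^ (m - 2 * m.gcd e) + 1) * (2 ^ (m - 1) - 1) := by
  have hm : (2 : ℕ) ^ m = 2 * 2 ^ (m - 1) := (mul_pow_sub_one (by omega) 2).symm
  have hw : (2 : ℤ) ^ m - 2 * (2 ^ (m - 1) : ℕ) = 0 := sub_eq_zero.2 (by exact_mod_cast hm)
  have hpairs := pow_mul_ncard_codewordsThrough_range_goldMap hF heven hlt (2 ^ (m - 1)) hT
  rw [hw, card_signSum_goldMap_eq_zero_eq hF heven hlt] at hpairs
  have hpos : 0 < 2 ^ m - 1 := Nat.sub_pos_of_lt (Nat.one_lt_two_pow (by omega))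
  refine Nat.eq_of_mul_eq_mul_left (Nat.mul_pos (pow_pos two_pos m) hpos) (hpairs.trans ?_)
  rw [hm]
  ring

end GoldDesigns

section ExtendedCode

/-- The point of `K` labelling each coordinate of the extended code of length `N`: `α ^ i` for the
`N - 1` coordinates of the cyclic code and `0` for the overall parity check. -/
def locator {K : Type*} [MonoidWithZero K] {N : ℕ} (α : K) (i : Fin N) : K :=
  if i.1 < N - 1 then α ^ i.1 else 0

lemma locator_injective {K : Type*} [MonoidWithZero K] [NoZeroDivisors K] {N : ℕ} {α : K}
    (hα₀ : α ≠ 0) (hα : orderOf α = N - 1) : Function.Injective (locator (N := N) α) := by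
  have := nontrivial_of_ne α 0 hα₀
  intro i j h
  simp only [locator] at h
  split_ifs at h with hi hj hj
  · exact Fin.ext (pow_injOn_Iio_orderOf (hi.trans_eq hα.symm) (hj.trans_eq hα.symm) h)
  · exact absurd h (pow_ne_zero _ hα₀)
  · exact absurd h.symm (pow_ne_zero _ hα₀)
  · omega

lemma aeval_pow_codePoly {A : Type*} [CommRing A] [Algebra (ZMod 2) A] {N : ℕ} (α : A) {k : ℕ}
    (hk : k ≠ 0) (c : Fin N → ZMod 2) :
    aeval (α ^ k) (codePoly fun i : Fin (N - 1) => c (Fin.castLE (Nat.sub_le _ _) i)) =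
      ∑ i, c i • locator α i ^ k := by
  cases N with
  | zero => simp [codePoly]
  | succ n =>
    have hlast : locator α (Fin.last n) = 0 := if_neg (by simp)
    have hinit : ∀ i : Fin n, locator α i.castSucc = α ^ i.1 := fun i => if_pos i.2
    rw [Fin.sum_univ_castSucc, hlast, zero_pow hk, smul_zero, add_zero]
    simp only [hinit, codePoly, map_sum, map_mul, aeval_C, map_pow, aeval_X, Algebra.smul_def,
      ← pow_mul, mul_comm k]
    rfl

variable {m e : ℕ} {α : GaloisField 2 m}

lemma locator_bijective (hm : m ≠ 0) (hα : orderOf α = 2 ^ m - 1) :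
    Function.Bijective (locator (N := 2 ^ m) α) := by
  have := Fintype.ofFinite (GaloisField 2 m)
  refine (Fintype.bijective_iff_injective_and_card _).2 ⟨locator_injective ?_ hα, ?_⟩
  · rintro rfl
    rw [orderOf_zero] at hα
    exact (Nat.sub_pos_of_lt (Nat.one_lt_two_pow hm)).ne hα
  · rw [Fintype.card_fin, ← Nat.card_eq_fintype_card, GaloisField.card 2 m hm]

lemma mem_CEbar_iff (hm : m ≠ 0) (heven : Even (m / m.gcd e)) (hα : orderOf α = 2 ^ m - 1)
    (c : Fin (2 ^ m) → ZMod 2) :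
    c ∈ CEbar m e α ↔ (∑ i, c i • locator α i = 0 ∧ ∑ i, c i • locator α i ^ (1 + 2 ^ e) = 0) ∧
      ∑ i, c i = 0 := by
  have hone := aeval_pow_codePoly α one_ne_zero c
  simp only [pow_one] at hone
  have hexp : 1 + 2 ^ e ≠ 0 := by positivity
  rw [← hone, ← aeval_pow_codePoly α hexp c, ← minpoly.dvd_iff, ← minpoly.dvd_iff]
  exact and_congr_left' ⟨fun h => ⟨(dvd_mul_right _ _).trans h, (dvd_mul_left _ _).trans h⟩,
    fun h => (isCoprime_minpoly_minpoly_pow hm heven hα).mul_dvd h.1 h.2⟩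

theorem dualCode_CEbar (hm : m ≠ 0) (heven : Even (m / m.gcd e)) (hα : orderOf α = 2 ^ m - 1) :
    (dualCode (CEbar m e α) : Set (Fin (2 ^ m) → ZMod 2)) =
      (· ∘ locator α) '' Set.range (goldMap (GaloisField 2 m) e) := by
  let D := ((LinearMap.funLeft (ZMod 2) (ZMod 2) (locator (N := 2 ^ m) α)).comp
    (goldMap (GaloisField 2 m) e)).range
  have hD : CEbar m e α = dualCode (D : Set (Fin (2 ^ m) → ZMod 2)) := by
    ext c
    rw [mem_CEbar_iff hm heven hα, ← forall_sum_goldMap_mul_eq_zero_iff]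
    constructor
    · rintro h _ ⟨p, rfl⟩
      simpa only [mul_comm] using! h p
    · intro h p
      simpa only [mul_comm] using! h _ ⟨p, rfl⟩
  rw [hD, dualCode_dualCode, ← Set.range_comp]
  rfl

theorem ncard_codewordsThrough_dualCode_CEbar [Fintype (GaloisField 2 m)] (hm : m ≠ 0)
    (heven : Even (m / m.gcd e)) (hα : orderOf α = 2 ^ m - 1) (k : ℕ) (T : Finset (Fin (2 ^ m))) :
    (codewordsThrough (dualCode (CEbar m e α) : Set (Fin (2 ^ m) → ZMod 2)) k T).ncard =
      (codewordsThrough (Set.range (goldMap (GaloisField 2 m) e)) k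
        (T.map (Equiv.ofBijective _ (locator_bijective hm hα)).toEmbedding)).ncard := by
  rw [dualCode_CEbar hm heven hα, ← ncard_codewordsThrough_image_comp]
  rfl

end ExtendedCode

theorem dual_code_designs_case_c_general
    (m e l : ℕ) (hlm : l < m) (heven : Even (m / Nat.gcd m e)) (hl : l = 2 * Nat.gcd m e)
    (α : GaloisField 2 m) (hα : orderOf α = 2 ^ m - 1) :
    let C : Set (Fin (2 ^ m) → ZMod 2) := dualCode (CEbar m e α)
    (∀ T, #T = 2 →
      2 ^ l * (2 ^ (l / 2) + 1) *
        (codewordsThrough C (2 ^ (m - 1) + 2 ^ ((m + l - 2) / 2)) T).ncard =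
      (2 ^ (m - 1) + 2 ^ ((m + l - 2) / 2)) * (2 ^ (m - 1) + 2 ^ ((m + l - 2) / 2) - 1)) ∧
    (∀ T, #T = 2 →
      2 ^ l * (2 ^ (l / 2) + 1) *
        (codewordsThrough C (2 ^ (m - 1) - 2 ^ ((m + l - 2) / 2)) T).ncard =
      (2 ^ (m - 1) - 2 ^ ((m + l - 2) / 2)) * (2 ^ (m - 1) - 2 ^ ((m + l - 2) / 2) - 1)) ∧
    (∀ T, #T = 2 →
      (2 ^ (l / 2) + 1) * (codewordsThrough C (2 ^ (m - 1) + 2 ^ ((m - 2) / 2)) T).ncard =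
      2 ^ ((m + l - 2) / 2) * (2 ^ (m / 2) + 1) * (2 ^ (m - 1) + 2 ^ ((m - 2) / 2) - 1)) ∧
    (∀ T, #T = 2 →
      (2 ^ (l / 2) + 1) * (codewordsThrough C (2 ^ (m - 1) - 2 ^ ((m - 2) / 2)) T).ncard =
      2 ^ ((m + l - 2) / 2) * (2 ^ (m / 2) - 1) * (2 ^ (m - 1) - 2 ^ ((m - 2) / 2) - 1)) ∧
    (∀ T, #T = 2 →
      (codewordsThrough C (2 ^ (m - 1)) T).ncard =
      ((2 ^ (l / 2) - 1) * 2 ^ (m - l) + 1) * (2 ^ (m - 1) - 1)) := by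
  subst hl
  have := Fintype.ofFinite (GaloisField 2 m)
  have hF : Nat.card (GaloisField 2 m) = 2 ^ m := GaloisField.card 2 m (by omega)
  have hm_even := (even_of_even_div_gcd heven).two_dvd
  obtain ⟨j, hj⟩ : ∃ j, m = 2 * j + 2 := ⟨m / 2 - 1, by omega⟩
  have hl : 2 * m.gcd e / 2 = m.gcd e := by omega
  have hml : (m + 2 * m.gcd e - 2) / 2 = m.gcd e + j := by omega
  have hm1 : m - 1 = 2 * j + 1 := by omega
  have hm2 : (m - 2) / 2 = j := by omega
  have hm : m / 2 = j + 1 := by omega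
  simp only [ncard_codewordsThrough_dualCode_CEbar (by omega) heven hα, hl]
  refine ⟨fun T hT => ?_, fun T hT => ?_, fun T hT => ?_, fun T hT => ?_, fun T hT => ?_⟩ <;>
    rw [← card_map] at hT
  · exact ncard_codewordsThrough_of_sq_eq_two_pow_add hF heven hlm
      (sq_two_pow_sub_two_mul (by omega) (by omega) (.inl rfl)) hT
  · exact ncard_codewordsThrough_of_sq_eq_two_pow_add hF heven hlm
      (sq_two_pow_sub_two_mul (by omega) (by omega) (.inr rfl)) hT
  · rw [ncard_codewordsThrough_of_sq_eq_two_pow hF heven hlm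
      (sq_two_pow_sub_two_mul (by omega) (by omega) (.inl rfl)) hT, hml, hm1, hm2, hm]
    ring
  · rw [ncard_codewordsThrough_of_sq_eq_two_pow hF heven hlm
      (sq_two_pow_sub_two_mul (by omega) (by omega) (.inr rfl)) hT, hml, hm1, hm2, hm,
      two_pow_two_mul_add_one_sub]
    ring
  · exact ncard_codewordsThrough_two_pow_sub_one hF heven hlm hT

/-- Let `m ≥ 4`, `1 ≤ e < m/2` with `m/gcd(m,e)` even, and
`ℓ = 2·gcd(m,e)`. Then the supports of the codewords of weights
`k = 2^{m−1} ± 2^{(m+ℓ−2)/2}`, `k = 2^{m−1} ± 2^{(m−2)/2}`, and `k = 2^{m−1}` in `C̄_E^⊥`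
form `2-(2^m, k, λ)` designs with the corresponding values of `λ` (the divisions in `λ`
are stated multiplied through by their denominators). -/
theorem dual_code_designs_case_c
    (m e l : ℕ) (hm : 4 ≤ m) (he1 : 1 ≤ e) (he : 2 * e < m)
    (heven : Even (m / Nat.gcd m e)) (hl : l = 2 * Nat.gcd m e)
    (α : GaloisField 2 m) (hα : orderOf α = 2 ^ m - 1) :
    (∀ T : Finset (Fin (2 ^ m)), T.card = 2 →
      2 ^ l * (2 ^ (l / 2) + 1) *
        {y : Fin (2 ^ m) → ZMod 2 | y ∈ dualCode (CEbar m e α) ∧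
          hammingNorm y = 2 ^ (m - 1) + 2 ^ ((m + l - 2) / 2) ∧ ∀ i ∈ T, y i ≠ 0}.ncard =
      (2 ^ (m - 1) + 2 ^ ((m + l - 2) / 2)) * (2 ^ (m - 1) + 2 ^ ((m + l - 2) / 2) - 1)) ∧
    (∀ T : Finset (Fin (2 ^ m)), T.card = 2 →
      2 ^ l * (2 ^ (l / 2) + 1) *
        {y : Fin (2 ^ m) → ZMod 2 | y ∈ dualCode (CEbar m e α) ∧
          hammingNorm y = 2 ^ (m - 1) - 2 ^ ((m + l - 2) / 2) ∧ ∀ i ∈ T, y i ≠ 0}.ncard =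
      (2 ^ (m - 1) - 2 ^ ((m + l - 2) / 2)) * (2 ^ (m - 1) - 2 ^ ((m + l - 2) / 2) - 1)) ∧
    (∀ T : Finset (Fin (2 ^ m)), T.card = 2 →
      (2 ^ (l / 2) + 1) *
        {y : Fin (2 ^ m) → ZMod 2 | y ∈ dualCode (CEbar m e α) ∧
          hammingNorm y = 2 ^ (m - 1) + 2 ^ ((m - 2) / 2) ∧ ∀ i ∈ T, y i ≠ 0}.ncard =
      2 ^ ((m + l - 2) / 2) * (2 ^ (m / 2) + 1) * (2 ^ (m - 1) + 2 ^ ((m - 2) / 2) - 1)) ∧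
    (∀ T : Finset (Fin (2 ^ m)), T.card = 2 →
      (2 ^ (l / 2) + 1) *
        {y : Fin (2 ^ m) → ZMod 2 | y ∈ dualCode (CEbar m e α) ∧
          hammingNorm y = 2 ^ (m - 1) - 2 ^ ((m - 2) / 2) ∧ ∀ i ∈ T, y i ≠ 0}.ncard =
      2 ^ ((m + l - 2) / 2) * (2 ^ (m / 2) - 1) * (2 ^ (m - 1) - 2 ^ ((m - 2) / 2) - 1)) ∧
    (∀ T : Finset (Fin (2 ^ m)), T.card = 2 →
      {y : Fin (2 ^ m) → ZMod 2 | y ∈ dualCode (CEbar m e α) ∧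
        hammingNorm y = 2 ^ (m - 1) ∧ ∀ i ∈ T, y i ≠ 0}.ncard =
      ((2 ^ (l / 2) - 1) * 2 ^ (m - l) + 1) * (2 ^ (m - 1) - 1)) :=
  dual_code_designs_case_c_general m e l
    (hl ▸ (Nat.mul_le_mul_left 2 (Nat.gcd_le_right m he1)).trans_lt he) heven hl α hα
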